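/- Let v ∈ M_n(ℂ) be a unitary with v^k = 1. The following are equivalent: (i) there exists a unitary a ∈ M_n(ℂ) with v a v* = ζ a and a^k = 1; (ii) there exist finitely many normal matrices a₀,…,a_N ∈ M_n(ℂ) with v a_i v* = ζ a_i, σ(a_i) ⊆ ✲_k, and Σ_i a_i a_i* = 1; (iii) the eigenspaces E_j = ker(v − ζ^j·1), j ∈ {0,…,k−1}, all have the same dimension (necessarily n/k). -/

import Mathlib

/-- `ζ = exp(2πi/k)`. -/
noncomputable def ltZeta (k : ℕ) : ℂ := Complex.exp (2 * Real.pi * Complex.I / k)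

/-- The "asterisk" set `✲_k = {t·ζ^m : t ∈ [0,1], 0 ≤ m < k} ⊆ ℂ`. -/
noncomputable def ltAsterisk (k : ℕ) : Set ℂ :=
  {z | ∃ t ∈ Set.Icc (0 : ℝ) 1, ∃ m : ℕ, m < k ∧ z = (t : ℂ) * ltZeta k ^ m}

/-!
For `k`-th roots of unity `w`, let `P w = k⁻¹ ∑_{m < k} (w⁻¹ v) ^ m` be the spectral projection of
`v`, so that `dim ker (v - w) = tr (P w)`. A relation `v a = ζ a v` gives `P (ζ w) a = a P w`.
Hence if `∑ aᵢ aᵢ* = ∑ aᵢ* aᵢ = 1`, then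
`tr (P (ζ w)) = ∑ tr (aᵢ P w aᵢ*) = ∑ tr (P w aᵢ* aᵢ) = tr (P w)`, and all the eigenspaces have the
same dimension. Conversely, if they do, the cyclic shift `b (j, i) ↦ b (j + 1, i)` of orthonormal
bases `b (j, ·)` of the mutually orthogonal spaces `ker (v - ζ ^ j)` is a unitary as in (i).
-/

open Finset Module

section Eigenprojection

variable {K A : Type*} [Field K] [Ring A] [Algebra K A] {k : ℕ} {ζ w : K} {x : A}

/-- The average of the powers of `w⁻¹ • x` over one period. When `x ^ k = 1`, `w ^ k = 1` and `k` is
invertible in `K`, this is the spectral idempotent of `x` at the eigenvalue `w`. -/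
noncomputable def eigenprojection (k : ℕ) (x : A) (w : K) : A :=
  (k : K)⁻¹ • ∑ m ∈ range k, (w⁻¹ • x) ^ m

theorem mul_eigenprojection (hx : x ^ k = 1) (hw : w ^ k = 1) :
    x * eigenprojection k x w = w • eigenprojection k x w := by
  rcases eq_or_ne k 0 with rfl | hk
  · simp [eigenprojection]
  have hw₀ : w ≠ 0 := (IsUnit.of_pow_eq_one hw hk).ne_zero
  have hfix : (w⁻¹ • x) * ∑ m ∈ range k, (w⁻¹ • x) ^ m = ∑ m ∈ range k, (w⁻¹ • x) ^ m := by
    have h := mul_neg_geom_sum (w⁻¹ • x) k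
    rwa [smul_pow, hx, inv_pow, hw, inv_one, one_smul, sub_self, sub_mul, one_mul,
      sub_eq_zero, eq_comm] at h
  rw [smul_mul_assoc, inv_smul_eq_iff₀ hw₀] at hfix
  rw [eigenprojection, mul_smul_comm, hfix, smul_comm]

theorem eigenprojection_mul_of_mul_eq_smul {a : A} (hζ : ζ ≠ 0) (h : x * a = ζ • (a * x)) :
    eigenprojection k x (ζ * w) * a = a * eigenprojection k x w := by
  have hsemi : SemiconjBy a (w⁻¹ • x) ((ζ * w)⁻¹ • x) := by
    rw [SemiconjBy, smul_mul_assoc, h, smul_smul, mul_inv_rev, inv_mul_cancel_right₀ hζ,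
      mul_smul_comm]
  simp only [eigenprojection, smul_mul_assoc, mul_smul_comm, sum_mul, mul_sum,
    (hsemi.pow_right _).eq]

theorem geom_sum_pow_eq_zero {m : ℕ} (hζ : IsPrimitiveRoot ζ k) (hm : m ≠ 0) (hmk : m < k) :
    ∑ j ∈ range k, (ζ ^ m) ^ j = 0 := by
  rw [geom_sum_eq (hζ.pow_ne_one_of_pos_of_lt hm hmk), pow_right_comm, hζ.pow_eq_one, one_pow,
    sub_self, zero_div]

theorem sum_eigenprojection [NeZero (k : K)] (hζ : IsPrimitiveRoot ζ k) (x : A) :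
    ∑ j ∈ range k, eigenprojection k x (ζ ^ j) = 1 := by
  have hk : k ≠ 0 := (NeZero.of_neZero_natCast K : NeZero k).ne
  calc ∑ j ∈ range k, eigenprojection k x (ζ ^ j)
      = (k : K)⁻¹ • ∑ m ∈ range k, (∑ j ∈ range k, (ζ⁻¹ ^ m) ^ j) • x ^ m := by
        simp only [eigenprojection, ← smul_sum, smul_pow, sum_smul, ← inv_pow]
        rw [sum_comm]
        simp only [pow_right_comm]
    _ = (k : K)⁻¹ • (k : K) • 1 := by
        rw [sum_eq_single_of_mem 0 (mem_range.mpr hk.pos)]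
        · simp
        · intro m hm hm₀
          rw [geom_sum_pow_eq_zero hζ.inv hm₀ (mem_range.mp hm), zero_smul]
    _ = 1 := inv_smul_smul₀ (NeZero.ne _) _

end Eigenprojection

section Eigenspace

variable {K V : Type*} [Field K] [AddCommGroup V] [Module K V] {k : ℕ} {ζ w : K} {f : End K V}

theorem isProj_eigenprojection [NeZero (k : K)] (hf : f ^ k = 1) (hw : w ^ k = 1) :
    LinearMap.IsProj (f.eigenspace w) (eigenprojection k f w) where
  map_mem x := End.mem_eigenspace_iff.mpr (LinearMap.congr_fun (mul_eigenprojection hf hw) x)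
  map_id x hx := by
    have hk : k ≠ 0 := (NeZero.of_neZero_natCast K : NeZero k).ne
    have hw₀ : w ≠ 0 := (IsUnit.of_pow_eq_one hw hk).ne_zero
    have hfix : (w⁻¹ • f) x = x := by
      rw [LinearMap.smul_apply, End.mem_eigenspace_iff.mp hx, inv_smul_smul₀ hw₀]
    have hpow (m : ℕ) : ((w⁻¹ • f) ^ m) x = x := by
      rw [End.pow_apply, Function.iterate_fixed hfix]
    simp only [eigenprojection, LinearMap.smul_apply, LinearMap.sum_apply, hpow, sum_const,
      card_range]
    rw [← Nat.cast_smul_eq_nsmul K, inv_smul_smul₀ (NeZero.ne _)]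

theorem iSup_eigenspace_pow_eq_top [NeZero (k : K)] (hζ : IsPrimitiveRoot ζ k) (hf : f ^ k = 1) :
    ⨆ j : Fin k, f.eigenspace (ζ ^ (j : ℕ)) = ⊤ := by
  refine eq_top_iff.mpr fun x _ => ?_
  have hx : ∑ j : Fin k, eigenprojection k f (ζ ^ (j : ℕ)) x = x := by
    rw [← LinearMap.sum_apply, Fin.sum_univ_eq_sum_range (fun j => eigenprojection k f (ζ ^ j)),
      sum_eigenprojection hζ, End.one_apply]
  rw [← hx]
  refine Submodule.sum_mem _ fun j _ => Submodule.mem_iSup_of_mem j ?_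
  exact (isProj_eigenprojection hf (by rw [pow_right_comm, hζ.pow_eq_one, one_pow])).map_mem x

theorem finrank_eigenspace_eq_trace [NeZero (k : K)] [FiniteDimensional K V] (hf : f ^ k = 1)
    (hw : w ^ k = 1) :
    (finrank K (f.eigenspace w) : K) = LinearMap.trace K V (eigenprojection k f w) :=
  (isProj_eigenprojection hf hw).trace.symm

theorem finrank_eigenspace_mul [CharZero K] [NeZero k] [FiniteDimensional K V] {ι : Type*}
    [Fintype ι] {a b : ι → End K V} (hf : f ^ k = 1) (hζ : ζ ^ k = 1) (hw : w ^ k = 1)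
    (hfa : ∀ i, f * a i = ζ • (a i * f)) (hab : ∑ i, a i * b i = 1) (hba : ∑ i, b i * a i = 1) :
    finrank K (f.eigenspace (ζ * w)) = finrank K (f.eigenspace w) := by
  have hζ₀ : ζ ≠ 0 := (IsUnit.of_pow_eq_one hζ (NeZero.ne k)).ne_zero
  rw [← Nat.cast_inj (R := K), finrank_eigenspace_eq_trace hf (by rw [mul_pow, hζ, hw, one_mul]),
    finrank_eigenspace_eq_trace hf hw]
  set P := eigenprojection k f w
  set Q := eigenprojection k f (ζ * w)
  have htrace (i : ι) : LinearMap.trace K V (Q * (a i * b i)) =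
      LinearMap.trace K V (P * (b i * a i)) := by
    rw [← mul_assoc, eigenprojection_mul_of_mul_eq_smul hζ₀ (hfa i), mul_assoc,
      LinearMap.trace_mul_comm, mul_assoc]
  calc LinearMap.trace K V Q = ∑ i, LinearMap.trace K V (Q * (a i * b i)) := by
        rw [← map_sum, ← mul_sum, hab, mul_one]
    _ = ∑ i, LinearMap.trace K V (P * (b i * a i)) := sum_congr rfl fun i _ => htrace i
    _ = LinearMap.trace K V P := by rw [← map_sum, ← mul_sum, hba, mul_one]

theorem finrank_eigenspace_pow [CharZero K] [NeZero k] [FiniteDimensional K V] {ι : Type*}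
    [Fintype ι] {a b : ι → End K V} (hf : f ^ k = 1) (hζ : ζ ^ k = 1)
    (hfa : ∀ i, f * a i = ζ • (a i * f)) (hab : ∑ i, a i * b i = 1) (hba : ∑ i, b i * a i = 1)
    (j : ℕ) : finrank K (f.eigenspace (ζ ^ j)) = finrank K (f.eigenspace 1) := by
  induction j with
  | zero => rw [pow_zero]
  | succ j ih =>
    have hj : (ζ ^ j) ^ k = 1 := by rw [pow_right_comm, hζ, one_pow]
    rw [pow_succ', finrank_eigenspace_mul hf hζ hj hfa hab hba, ih]

theorem finrank_eigenspace_conj {W : Type*} [AddCommGroup W] [Module K W] (e : V ≃ₗ[K] W)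
    (f : End K V) (w : K) :
    finrank K (End.eigenspace (e.conj f) w) = finrank K (f.eigenspace w) := by
  have hmap : End.eigenspace (e.conj f) w = (f.eigenspace w).map (e : V →ₗ[K] W) := by
    ext y
    simp [Submodule.mem_map_equiv, LinearEquiv.conj_apply_apply, ← e.eq_symm_apply]
  rw [hmap, e.finrank_map_eq]

end Eigenspace

section InnerProductSpace

variable {𝕜 E : Type*} [RCLike 𝕜] [NormedAddCommGroup E] [InnerProductSpace 𝕜 E]
  {f : End 𝕜 E} {k : ℕ} {ζ : 𝕜}

theorem orthogonalFamily_eigenspaces_of_inner_map_map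
    (hf : ∀ x y, inner 𝕜 (f x) (f y) = inner 𝕜 x y) :
    OrthogonalFamily 𝕜 (fun μ => f.eigenspace μ) fun μ => (f.eigenspace μ).subtypeₗᵢ := by
  rintro μ ν hμν ⟨x, hx⟩ ⟨y, hy⟩
  rw [End.mem_eigenspace_iff] at hx hy
  change inner 𝕜 x y = 0
  by_contra hxy
  have hμ : starRingEnd 𝕜 μ * μ = 1 := by
    have hxx : inner 𝕜 x x ≠ 0 := inner_self_ne_zero.mpr fun h => hxy (by rw [h, inner_zero_left])
    refine mul_right_cancel₀ hxx ?_
    rw [one_mul, mul_assoc, ← inner_smul_right, ← inner_smul_left, ← hx, hf]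
  have hν : starRingEnd 𝕜 μ * ν = 1 := by
    refine mul_right_cancel₀ hxy ?_
    rw [one_mul, mul_assoc, ← inner_smul_right, ← inner_smul_left, ← hx, ← hy, hf]
  exact hμν (mul_left_cancel₀ (left_ne_zero_of_mul_eq_one hμ) (hμ.trans hν.symm))

theorem exists_orthonormalBasis_apply_eq_pow_smul [FiniteDimensional 𝕜 E] [NeZero k] {d : ℕ}
    (hf : ∀ x y, inner 𝕜 (f x) (f y) = inner 𝕜 x y) (hfk : f ^ k = 1) (hζ : IsPrimitiveRoot ζ k)
    (hd : ∀ j : Fin k, finrank 𝕜 (f.eigenspace (ζ ^ (j : ℕ))) = d) :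
    ∃ b : OrthonormalBasis (Fin k × Fin d) 𝕜 E, ∀ p, f (b p) = ζ ^ (p.1 : ℕ) • b p := by
  have hinj : Function.Injective fun j : Fin k => ζ ^ (j : ℕ) := fun i j h =>
    Fin.ext (hζ.pow_inj i.2 j.2 h)
  let F (j : Fin k) : Submodule 𝕜 E := f.eigenspace (ζ ^ (j : ℕ))
  have horth : OrthogonalFamily 𝕜 (fun j => F j) fun j => (F j).subtypeₗᵢ :=
    (orthogonalFamily_eigenspaces_of_inner_map_map hf).comp hinj
  have hint : DirectSum.IsInternal F := horth.isInternal_iff.mpr <| by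
    rw [iSup_eigenspace_pow_eq_top hζ hfk, Submodule.top_orthogonal_eq_bot]
  let c (j : Fin k) : OrthonormalBasis (Fin d) 𝕜 (F j) :=
    (stdOrthonormalBasis 𝕜 (F j)).reindex (finCongr (hd j))
  refine ⟨(hint.collectedOrthonormalBasis horth c).reindex (Equiv.sigmaEquivProd _ _), fun p => ?_⟩
  rw [OrthonormalBasis.reindex_apply]
  exact End.mem_eigenspace_iff.mp (hint.collectedOrthonormalBasis_mem horth c ⟨p.1, p.2⟩)

theorem orthonormalBasis_equiv_pow_apply {ι : Type*} [Fintype ι] (b : OrthonormalBasis ι 𝕜 E)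
    (σ : Equiv.Perm ι) (m : ℕ) (i : ι) : (b.equiv b σ ^ m) (b i) = b ((σ ^ m) i) := by
  induction m with
  | zero => rfl
  | succ m ih =>
    rw [pow_succ', LinearIsometryEquiv.coe_mul, Function.comp_apply, ih,
      OrthonormalBasis.equiv_apply_basis, pow_succ', Equiv.Perm.mul_apply]

theorem exists_linearIsometryEquiv_of_perm {ι : Type*} [Fintype ι] (b : OrthonormalBasis ι 𝕜 E)
    {c : ι → 𝕜} (hb : ∀ i, f (b i) = c i • b i) {σ : Equiv.Perm ι} (hσ : σ ^ k = 1)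
    (hc : ∀ i, c (σ i) = ζ * c i) :
    ∃ U : E ≃ₗᵢ[𝕜] E, U ^ k = 1 ∧ ∀ x, f (U x) = ζ • U (f x) := by
  refine ⟨b.equiv b σ, ?_, fun x => ?_⟩
  · refine b.toBasis.ext_linearIsometryEquiv fun i => ?_
    rw [b.coe_toBasis, orthonormalBasis_equiv_pow_apply, hσ]
    rfl
  · let U : End 𝕜 E := (b.equiv b σ).toLinearEquiv
    suffices h : f * U = ζ • (U * f) from LinearMap.congr_fun h x
    have hU (i : ι) : U (b i) = b (σ i) := b.equiv_apply_basis b σ i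
    refine b.toBasis.ext fun i => ?_
    rw [b.coe_toBasis, End.mul_apply, LinearMap.smul_apply, End.mul_apply, hU, hb, hb, map_smul,
      hU, smul_smul, hc]

theorem prodCongr_addRight_refl_pow_eq_one {G : Type*} (κ : Type*) [AddGroup G] {g : G}
    (hg : k • g = 0) :
    (Equiv.prodCongr (Equiv.addRight g) (Equiv.refl κ) : Equiv.Perm (G × κ)) ^ k = 1 := by
  ext1 p
  rw [Equiv.Perm.coe_pow]
  change (Prod.map (· + g) id)^[k] p = p
  rw [Prod.map_iterate, add_right_iterate, hg, Function.iterate_id, Prod.map_apply, add_zero, id]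

theorem exists_linearIsometryEquiv_of_finrank_eigenspace_eq [FiniteDimensional 𝕜 E] [NeZero k]
    (hf : ∀ x y, inner 𝕜 (f x) (f y) = inner 𝕜 x y) (hfk : f ^ k = 1) (hζ : IsPrimitiveRoot ζ k)
    (hdim : ∀ j j' : Fin k, finrank 𝕜 (f.eigenspace (ζ ^ (j : ℕ))) =
      finrank 𝕜 (f.eigenspace (ζ ^ (j' : ℕ)))) :
    ∃ U : E ≃ₗᵢ[𝕜] E, U ^ k = 1 ∧ ∀ x, f (U x) = ζ • U (f x) := by
  obtain ⟨b, hb⟩ := exists_orthonormalBasis_apply_eq_pow_smul hf hfk hζ fun j => hdim j 0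
  have hk : k • (1 : Fin k) = 0 := by
    simpa using card_nsmul_eq_zero (x := (1 : Fin k))
  refine exists_linearIsometryEquiv_of_perm b hb (prodCongr_addRight_refl_pow_eq_one _ hk)
    fun p => ?_
  change ζ ^ ((p.1 + 1 : Fin k) : ℕ) = _
  rw [Fin.val_add, ← pow_eq_pow_mod _ hζ.pow_eq_one, pow_add, Fin.val_one',
    ← pow_eq_pow_mod _ hζ.pow_eq_one, pow_one, mul_comm]

end InnerProductSpace

section Matrix

theorem isPrimitiveRoot_ltZeta {k : ℕ} (hk : k ≠ 0) : IsPrimitiveRoot (ltZeta k) k :=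
  Complex.isPrimitiveRoot_exp k hk

theorem mem_ltAsterisk_of_pow_eq_one {k : ℕ} [NeZero k] {z : ℂ} (hz : z ^ k = 1) :
    z ∈ ltAsterisk k := by
  obtain ⟨m, hm, rfl⟩ := (isPrimitiveRoot_ltZeta (NeZero.ne k)).eq_pow_of_pow_eq_one hz
  exact ⟨1, by simp, m, hm, by simp⟩

theorem pow_eq_one_of_mem_spectrum {K A : Type*} [Field K] [Ring A] [Algebra K A] {a : A} {k : ℕ}
    (ha : a ^ k = 1) {z : K} (hz : z ∈ spectrum K a) : z ^ k = 1 := by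
  cases subsingleton_or_nontrivial A
  · simp [spectrum.of_subsingleton] at hz
  · simpa [ha, spectrum.one_eq] using spectrum.pow_mem_pow a k hz

theorem mul_mul_star_eq_smul_iff {R A : Type*} [Monoid A] [StarMul A] [SMul R A]
    [IsScalarTower R A A] {v : A} (hv : v ∈ unitary A) (c : R) (a : A) :
    v * a * star v = c • a ↔ v * a = c • (a * v) := by
  rw [← smul_mul_assoc]
  constructor <;> intro h
  · rw [← h, mul_assoc, Unitary.star_mul_self_of_mem hv, mul_one]
  · rw [h, mul_assoc, Unitary.mul_star_self_of_mem hv, mul_one]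

theorem finrank_eigenspace_toLin'_pow {K n ι : Type*} [Field K] [StarRing K] [CharZero K]
    [Fintype n] [DecidableEq n] [Fintype ι] {k : ℕ} [NeZero k] {ζ : K} {v : Matrix n n K}
    {a : ι → Matrix n n K} (hv : v ∈ unitary (Matrix n n K)) (hvk : v ^ k = 1) (hζ : ζ ^ k = 1)
    (hva : ∀ i, v * a i * star v = ζ • a i) (haa : ∑ i, a i * star (a i) = 1)
    (haa' : ∑ i, star (a i) * a i = 1) (j : ℕ) :
    finrank K (End.eigenspace (Matrix.toLin' v) (ζ ^ j)) =
      finrank K (End.eigenspace (Matrix.toLin' v) 1) := by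
  let L := Matrix.toLinAlgEquiv' (R := K) (n := n)
  refine finrank_eigenspace_pow (f := L v) (a := fun i => L (a i)) (b := fun i => L (star (a i)))
    ?_ hζ (fun i => ?_) ?_ ?_ j
  · rw [← map_pow, hvk, map_one]
  · rw [← map_mul, (mul_mul_star_eq_smul_iff hv ζ (a i)).mp (hva i), map_smul, map_mul]
  · simp only [← map_mul, ← map_sum, haa, map_one]
  · simp only [← map_mul, ← map_sum, haa', map_one]

variable {n 𝕜 : Type*} [Fintype n] [DecidableEq n] [RCLike 𝕜] {v : Matrix n n 𝕜} {k : ℕ} {ζ : 𝕜}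

theorem finrank_eigenspace_toEuclideanLin (v : Matrix n n 𝕜) (w : 𝕜) :
    finrank 𝕜 (End.eigenspace (Matrix.toEuclideanLin v) w) =
      finrank 𝕜 (End.eigenspace (Matrix.toLin' v) w) :=
  finrank_eigenspace_conj (WithLp.linearEquiv 2 𝕜 (n → 𝕜)).symm (Matrix.toLin' v) w

theorem inner_toEuclideanLin_of_mem_unitary (hv : v ∈ unitary (Matrix n n 𝕜))
    (x y : EuclideanSpace 𝕜 n) :
    inner 𝕜 (Matrix.toEuclideanLin v x) (Matrix.toEuclideanLin v y) = inner 𝕜 x y :=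
  (Unitary.linearIsometryEquiv
    (⟨Matrix.toEuclideanCLM (n := n) (𝕜 := 𝕜) v, Unitary.map_mem Matrix.toEuclideanCLM hv⟩ :
      unitary (EuclideanSpace 𝕜 n →L[𝕜] EuclideanSpace 𝕜 n))).inner_map_map x y

theorem exists_unitary_of_finrank_eigenspace_eq [NeZero k] (hv : v ∈ unitary (Matrix n n 𝕜))
    (hvk : v ^ k = 1) (hζ : IsPrimitiveRoot ζ k)
    (hdim : ∀ j j' : Fin k, finrank 𝕜 (End.eigenspace (Matrix.toLin' v) (ζ ^ (j : ℕ))) =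
      finrank 𝕜 (End.eigenspace (Matrix.toLin' v) (ζ ^ (j' : ℕ)))) :
    ∃ a ∈ unitary (Matrix n n 𝕜), v * a * star v = ζ • a ∧ a ^ k = 1 := by
  let Φ := Matrix.toEuclideanCLM (n := n) (𝕜 := 𝕜)
  have hfk : (Matrix.toEuclideanLin v : End 𝕜 (EuclideanSpace 𝕜 n)) ^ k = 1 := by
    rw [← Matrix.coe_toEuclideanCLM_eq_toEuclideanLin, ← ContinuousLinearMap.toLinearMap_pow,
      ← map_pow, hvk, map_one]
    rfl
  obtain ⟨U, hUk, hU⟩ := exists_linearIsometryEquiv_of_finrank_eigenspace_eq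
    (inner_toEuclideanLin_of_mem_unitary hv) hfk hζ
    (by simpa only [finrank_eigenspace_toEuclideanLin] using hdim)
  let u := Unitary.linearIsometryEquiv.symm U
  have huk : u ^ k = 1 := by rw [← map_pow, hUk, map_one]
  refine ⟨Φ.symm u, Unitary.map_mem Φ.symm u.2, ?_, ?_⟩
  · rw [mul_mul_star_eq_smul_iff hv]
    apply EquivLike.injective Φ
    rw [map_mul, map_smul, map_mul, StarAlgEquiv.apply_symm_apply]
    ext1 x
    exact hU x
  · rw [← map_pow, ← SubmonoidClass.coe_pow, huk, OneMemClass.coe_one, map_one]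

end Matrix

theorem stmt6_general {n : Type*} [Fintype n] [DecidableEq n] {k : ℕ} [NeZero k] {ζ : ℂ}
    (hζ : IsPrimitiveRoot ζ k) {v : Matrix n n ℂ} (hv : v ∈ unitary (Matrix n n ℂ))
    (hvk : v ^ k = 1) :
    List.TFAE [
      ∃ a : Matrix n n ℂ, a ∈ unitary (Matrix n n ℂ) ∧ v * a * star v = ζ • a ∧ a ^ k = 1,
      ∃ N : ℕ, ∃ a : Fin (N + 1) → Matrix n n ℂ, (∀ i, IsStarNormal (a i)) ∧
        (∀ i, v * a i * star v = ζ • a i) ∧ (∀ i, spectrum ℂ (a i) ⊆ ltAsterisk k) ∧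
        ∑ i, a i * star (a i) = 1,
      ∃ N : ℕ, ∃ a : Fin N → Matrix n n ℂ, (∀ i, v * a i * star v = ζ • a i) ∧
        ∑ i, a i * star (a i) = 1 ∧ ∑ i, star (a i) * a i = 1,
      ∀ j j' : Fin k, finrank ℂ (End.eigenspace (Matrix.toLin' v) (ζ ^ (j : ℕ))) =
        finrank ℂ (End.eigenspace (Matrix.toLin' v) (ζ ^ (j' : ℕ)))] := by
  tfae_have 1 → 2 := fun ⟨a, ha, hva, hak⟩ =>
    ⟨0, fun _ => a, fun _ => ⟨ha.1.trans ha.2.symm⟩, fun _ => hva,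
      fun _ _ hz => mem_ltAsterisk_of_pow_eq_one (pow_eq_one_of_mem_spectrum hak hz),
      by simpa using ha.2⟩
  tfae_have 2 → 3 := fun ⟨N, a, hnormal, hva, _, haa⟩ =>
    ⟨N + 1, a, hva, haa, by simpa only [(hnormal _).star_comm_self.eq] using haa⟩
  tfae_have 3 → 4 := fun ⟨_, _, hva, haa, haa'⟩ j j' =>
    (finrank_eigenspace_toLin'_pow hv hvk hζ.pow_eq_one hva haa haa' j).trans
      (finrank_eigenspace_toLin'_pow hv hvk hζ.pow_eq_one hva haa haa' j').symm
  tfae_have 4 → 1 := exists_unitary_of_finrank_eigenspace_eq hv hvk hζ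
  tfae_finish

/-- For a unitary `v ∈ M_n(ℂ)` with `v^k = 1`, the following are
equivalent: (i) there is a unitary `a` with `v a v* = ζ a` and `a^k = 1`; (ii) there is
a finite family of normal matrices `a₀, …, a_N` with `v aᵢ v* = ζ aᵢ`,
`σ(aᵢ) ⊆ ✲_k` and `Σ aᵢ aᵢ* = 1`; (iii) all the eigenspaces
`E_j = ker(v - ζ^j·1)` have the same dimension. -/
theorem stmt6 (n k : ℕ) (hk : 0 < k) (v : Matrix (Fin n) (Fin n) ℂ)
    (hv : v ∈ unitary (Matrix (Fin n) (Fin n) ℂ)) (hvk : v ^ k = 1) :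
    ((∃ a : Matrix (Fin n) (Fin n) ℂ, a ∈ unitary (Matrix (Fin n) (Fin n) ℂ) ∧
        v * a * star v = ltZeta k • a ∧ a ^ k = 1) ↔
      (∀ j j' : Fin k,
        Module.finrank ℂ
          ↥(Module.End.eigenspace (Matrix.toLin' v) (ltZeta k ^ (j : ℕ))) =
        Module.finrank ℂ
          ↥(Module.End.eigenspace (Matrix.toLin' v) (ltZeta k ^ (j' : ℕ))))) ∧
    ((∃ N : ℕ, ∃ a : Fin (N + 1) → Matrix (Fin n) (Fin n) ℂ,
        (∀ i, IsStarNormal (a i)) ∧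
        (∀ i, v * a i * star v = ltZeta k • a i) ∧
        (∀ i, spectrum ℂ (a i) ⊆ ltAsterisk k) ∧
        (∑ i, a i * star (a i)) = 1) ↔
      (∀ j j' : Fin k,
        Module.finrank ℂ
          ↥(Module.End.eigenspace (Matrix.toLin' v) (ltZeta k ^ (j : ℕ))) =
        Module.finrank ℂ
          ↥(Module.End.eigenspace (Matrix.toLin' v) (ltZeta k ^ (j' : ℕ))))) := by
  have : NeZero k := ⟨hk.ne'⟩
  have h := stmt6_general (isPrimitiveRoot_ltZeta hk.ne') hv hvk
  exact ⟨h.out 0 3, h.out 1 3⟩
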